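/- arXiv:2501.04853 — 2 statements merged into one kernel-verified Lean document; each statement's English description precedes it below -/
import Mathlib

section
/- Fix d in {(1,1),(0,1),(1,0)} and d' = (0,0). Suppose Assumption DID holds for d and for d', Assumption MAR holds, P(D = d | X) > 0 and P(D = d' | X) > 0 a.s., P(D = d, S = 1) > 0, P(D = d, S = 0) > 0, P(D = d', S = 1) > 0, and all displayed expectations are finite. Let g be a measurable function of X with g(X) = E[Y2(d) − Y2(d') | D = d, X] a.s. under the law of X given D = d. Then the complete-case difference-in-differences estimand satisfies E[S · 1{D = d}]^{-1} · E[S · 1{D = d} · (E[ΔY | D = d, S = 1, X] − E[ΔY | D = d', S = 1, X])] = τ_{dd'} + P(S = 0 | D = d) · (E[g(X) | D = d, S = 1] − E[g(X) | D = d, S = 0]). -/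
open MeasureTheory Set
open scoped Classical

noncomputable section

namespace DIDMissing

variable {Ω : Type*} {𝓧 : Type*}

/-- Real-valued indicator of a set. -/
def ind (A : Set Ω) : Ω → ℝ := A.indicator fun _ => (1 : ℝ)

/-- All treatment paths `{0,1}²` (coded as reals). -/
def allPaths : Set (ℝ × ℝ) := {(0, 0), (0, 1), (1, 0), (1, 1)}

/-- The three treated paths `{(1,1), (0,1), (1,0)}`. -/
def threePaths : Set (ℝ × ℝ) := {(1, 1), (0, 1), (1, 0)}

/-- The event `{D = d}` for a treatment path `d = (d₁, d₂)`. -/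
def evD (D1 D2 : Ω → ℝ) (d : ℝ × ℝ) : Set Ω := {ω | D1 ω = d.1 ∧ D2 ω = d.2}

/-- The event `{D₂ = b}`. -/
def evD2 (D2 : Ω → ℝ) (b : ℝ) : Set Ω := {ω | D2 ω = b}

/-- `g` is a (measurable-in-the-covariate) version of the conditional mean `E[Z ∣ A, X]`:
for every bounded measurable `h`, `E[1_A · Z · h(X)] = E[1_A · g(X) · h(X)]`. -/
def IsCondMeanGiven [MeasurableSpace Ω] [MeasurableSpace 𝓧] (P : Measure Ω) (X : Ω → 𝓧)
    (A : Set Ω) (Z : Ω → ℝ) (g : 𝓧 → ℝ) : Prop :=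
  Measurable g ∧
    ∀ h : 𝓧 → ℝ, Measurable h → (∃ C, ∀ x, |h x| ≤ C) →
      ∫ ω, ind A ω * Z ω * h (X ω) ∂P = ∫ ω, ind A ω * g (X ω) * h (X ω) ∂P

/-- Assumption DID for a path `d` relative to `d' = (0,0)`:
(i) no anticipation, `E[Y₀(d) ∣ D = d, X] = E[Y₀(0,0) ∣ D = d, X]` a.s., stated in the
version-free integral form; and (ii) conditional parallel trends, stated as the existence
of a common version of `E[Y₂(0,0) − Y₀(0,0) ∣ X]` and `E[Y₂(0,0) − Y₀(0,0) ∣ D = d, X]`. -/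
def DID [MeasurableSpace Ω] [MeasurableSpace 𝓧] (P : Measure Ω) (X : Ω → 𝓧)
    (D1 D2 : Ω → ℝ) (Y0p Y2p : ℝ × ℝ → Ω → ℝ) (d : ℝ × ℝ) : Prop :=
  (∀ h : 𝓧 → ℝ, Measurable h → (∃ C, ∀ x, |h x| ≤ C) →
      ∫ ω, ind (evD D1 D2 d) ω * Y0p d ω * h (X ω) ∂P
        = ∫ ω, ind (evD D1 D2 d) ω * Y0p (0, 0) ω * h (X ω) ∂P) ∧
  (∃ tr : 𝓧 → ℝ,
      IsCondMeanGiven P X Set.univ (fun ω => Y2p (0, 0) ω - Y0p (0, 0) ω) tr ∧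
      IsCondMeanGiven P X (evD D1 D2 d) (fun ω => Y2p (0, 0) ω - Y0p (0, 0) ω) tr)

/-- Assumption MAR: `S ⟂ (D₁, ΔY) ∣ (D₂, X)`, where `q d₂` is a version of the
missing-data probability `P(S = 1 ∣ D₂ = d₂, X)`, which is `(0,1]`-valued a.s. -/
def MAR [MeasurableSpace Ω] [MeasurableSpace 𝓧] (P : Measure Ω) (X : Ω → 𝓧)
    (D1 D2 S Y0 Y2 : Ω → ℝ) (q : ℝ → 𝓧 → ℝ) : Prop :=
  (∀ d2 ∈ ({0, 1} : Set ℝ), IsCondMeanGiven P X (evD2 D2 d2) S (q d2)) ∧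
  (∀ d2 ∈ ({0, 1} : Set ℝ), ∀ᵐ ω ∂P, 0 < q d2 (X ω) ∧ q d2 (X ω) ≤ 1) ∧
  (∀ d2 ∈ ({0, 1} : Set ℝ), ∀ f : ℝ × ℝ → ℝ, Measurable f → (∃ C, ∀ p, |f p| ≤ C) →
      ∀ h : 𝓧 → ℝ, Measurable h → (∃ C, ∀ x, |h x| ≤ C) →
        ∫ ω, ind (evD2 D2 d2) ω * S ω * f (D1 ω, Y2 ω - Y0 ω) * h (X ω) ∂P
          = ∫ ω, ind (evD2 D2 d2) ω * q d2 (X ω) * f (D1 ω, Y2 ω - Y0 ω) * h (X ω) ∂P)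

/-- The path-dependent ATT `τ_{d,(0,0)} = E[Y₂(d) − Y₂(0,0) ∣ D = d]`. -/
def tau [MeasurableSpace Ω] (P : Measure Ω) (D1 D2 : Ω → ℝ)
    (Y2p : ℝ × ℝ → Ω → ℝ) (d : ℝ × ℝ) : ℝ :=
  (P (evD D1 D2 d)).toReal⁻¹ * ∫ ω in evD D1 D2 d, (Y2p d ω - Y2p (0, 0) ω) ∂P

theorem ind_nonneg' (A : Set Ω) (ω : Ω) : 0 ≤ ind A ω := by
  unfold ind; by_cases h : ω ∈ A <;> simp [h]

theorem ind_abs_le (A : Set Ω) (ω : Ω) : |ind A ω| ≤ 1 := by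
  unfold ind; by_cases h : ω ∈ A <;> simp [h]

theorem ind_of_mem {A : Set Ω} {ω : Ω} (h : ω ∈ A) : ind A ω = 1 := by
  unfold ind; simp [h]

theorem ind_of_not_mem {A : Set Ω} {ω : Ω} (h : ω ∉ A) : ind A ω = 0 := by
  unfold ind; simp [h]

theorem meas_ind [MeasurableSpace Ω] {A : Set Ω} (hA : MeasurableSet A) : Measurable (ind A) :=
  measurable_const.indicator hA

theorem int_mul [MeasurableSpace Ω] {P : Measure Ω} {f w : Ω → ℝ} (hf : Integrable f P)
    (hw : Measurable w) (C : ℝ) (hC : ∀ᵐ ω ∂P, |w ω| ≤ C) :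
    Integrable (fun ω => w ω * f ω) P :=
  hf.bdd_mul hw.aestronglyMeasurable (c := C) (by simpa using hC)

/-- Truncation extension. -/
theorem trunc_ext [MeasurableSpace Ω] {ι : Type*} [MeasurableSpace ι] {P : Measure Ω}
    {U : Ω → ι} (hU : Measurable U) {w1 w2 : Ω → ℝ} (hw1 : Measurable w1) (hw2 : Measurable w2)
    (heq : ∀ f : ι → ℝ, Measurable f → (∃ C, ∀ x, |f x| ≤ C) →
      ∫ ω, w1 ω * f (U ω) ∂P = ∫ ω, w2 ω * f (U ω) ∂P)
    {F : ι → ℝ} (hF : Measurable F)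
    (h1 : Integrable (fun ω => w1 ω * F (U ω)) P) (h2 : Integrable (fun ω => w2 ω * F (U ω)) P) :
    ∫ ω, w1 ω * F (U ω) ∂P = ∫ ω, w2 ω * F (U ω) ∂P := by
  set Fn : ℕ → ι → ℝ := fun n => {x | |F x| ≤ n}.indicator F with hFn
  have hms : ∀ n : ℕ, MeasurableSet {x | |F x| ≤ n} := fun n =>
    measurableSet_le hF.abs measurable_const
  have hFm : ∀ n, Measurable (Fn n) := fun n => hF.indicator (hms n)
  have hle : ∀ n x, |Fn n x| ≤ |F x| := by
    intro n x
    by_cases h : |F x| ≤ n <;> simp [hFn, Set.indicator, h]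
  have hb : ∀ n, ∃ C, ∀ x, |Fn n x| ≤ C := by
    intro n
    refine ⟨n, fun x => ?_⟩
    by_cases h : |F x| ≤ n <;> simp [hFn, Set.indicator, h]
  have hlim : ∀ x, Filter.Tendsto (fun n => Fn n x) Filter.atTop (nhds (F x)) := by
    intro x
    obtain ⟨N, hN⟩ := exists_nat_ge |F x|
    apply tendsto_const_nhds.congr'
    filter_upwards [Filter.eventually_ge_atTop N] with n hn
    have : |F x| ≤ n := hN.trans (by exact_mod_cast hn)
    simp [hFn, Set.indicator, this]
  have key : ∀ w : Ω → ℝ, Measurable w → Integrable (fun ω => w ω * F (U ω)) P →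
      Filter.Tendsto (fun n => ∫ ω, w ω * Fn n (U ω) ∂P) Filter.atTop
        (nhds (∫ ω, w ω * F (U ω) ∂P)) := by
    intro w hw hi
    refine tendsto_integral_of_dominated_convergence (fun ω => |w ω * F (U ω)|)
      (fun n => (hw.mul ((hFm n).comp hU)).aestronglyMeasurable) hi.abs ?_ ?_
    · intro n
      refine Filter.Eventually.of_forall fun ω => ?_
      rw [Real.norm_eq_abs, abs_mul, abs_mul]
      exact mul_le_mul_of_nonneg_left (hle n _) (abs_nonneg _)
    · exact Filter.Eventually.of_forall fun ω => (hlim (U ω)).const_mul (w ω)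
  have k1 := key w1 hw1 h1
  have k2 := key w2 hw2 h2
  refine tendsto_nhds_unique k1 (k2.congr fun n => ?_)
  exact (heq _ (hFm n) (hb n)).symm

theorem abs_sign_le (r : ℝ) : |Real.sign r| ≤ 1 := by
  rcases Real.sign_apply_eq r with h | h | h <;> simp [h]

theorem mul_sign_abs (r : ℝ) : r * Real.sign r = |r| := by
  rcases lt_trichotomy r 0 with h | h | h
  · rw [Real.sign_of_neg h, abs_of_neg h]; ring
  · simp [h]
  · rw [Real.sign_of_pos h, abs_of_pos h]; ring

theorem meas_sign : Measurable Real.sign := by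
  unfold Real.sign
  exact Measurable.ite measurableSet_Iio measurable_const
    (Measurable.ite measurableSet_Ioi measurable_const measurable_const)

/-- Conditional means are automatically integrable. -/
theorem condMean_integrable [MeasurableSpace Ω] [MeasurableSpace 𝓧] {P : Measure Ω}
    [IsProbabilityMeasure P]
    {X : Ω → 𝓧} (hX : Measurable X) {A : Set Ω} (hA : MeasurableSet A) {Z : Ω → ℝ}
    (hZ : Integrable Z P) {g : 𝓧 → ℝ} (hg : IsCondMeanGiven P X A Z g) :
    Integrable (fun ω => ind A ω * g (X ω)) P := by
  obtain ⟨hgm, hgi⟩ := hg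
  have hms : ∀ n : ℕ, MeasurableSet {x | |g x| ≤ n} := fun n =>
    measurableSet_le hgm.abs measurable_const
  set hn : ℕ → 𝓧 → ℝ := fun n => {x | |g x| ≤ n}.indicator (fun x => Real.sign (g x)) with hhn
  have hnm : ∀ n, Measurable (hn n) := fun n => (meas_sign.comp hgm).indicator (hms n)
  have hnb : ∀ n x, |hn n x| ≤ 1 := by
    intro n x
    by_cases h : |g x| ≤ n <;> simp [hhn, Set.indicator, h, abs_sign_le]
  have hAm := meas_ind hA
  set fn : ℕ → Ω → ℝ := fun n ω => ind A ω * g (X ω) * hn n (X ω) with hfn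
  have hfm : ∀ n, Measurable (fn n) := fun n =>
    (hAm.mul (hgm.comp hX)).mul ((hnm n).comp hX)
  have hfe : ∀ n ω, fn n ω = if |g (X ω)| ≤ n then ind A ω * |g (X ω)| else 0 := by
    intro n ω
    by_cases h : |g (X ω)| ≤ n
    · simp only [hfn, hhn, Set.indicator, Set.mem_ofPred_eq, h, if_true, mul_assoc, mul_sign_abs]
    · simp [hfn, hhn, Set.indicator, h]
  have hf0 : ∀ n ω, 0 ≤ fn n ω := by
    intro n ω; rw [hfe]; split_ifs
    · exact mul_nonneg (ind_nonneg' _ _) (abs_nonneg _)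
    · exact le_rfl
  have hfint : ∀ n, Integrable (fn n) P := by
    intro n
    refine Integrable.of_bound (hfm n).aestronglyMeasurable n
      (Filter.Eventually.of_forall fun ω => ?_)
    rw [Real.norm_eq_abs, abs_of_nonneg (hf0 n ω), hfe]
    split_ifs with h
    · have := ind_abs_le A ω
      rw [abs_of_nonneg (ind_nonneg' _ _)] at this
      calc _ ≤ 1 * |g (X ω)| := mul_le_mul_of_nonneg_right this (abs_nonneg _)
        _ ≤ n := by rw [one_mul]; exact h
    · positivity
  have hbound : ∀ n, ∫ ω, fn n ω ∂P ≤ ∫ ω, |Z ω| ∂P := by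
    intro n
    have := hgi (hn n) (hnm n) ⟨1, hnb n⟩
    rw [hfn, ← this]
    refine integral_mono_ae ?_ hZ.abs ?_
    · have h1 : Integrable (fun ω => ind A ω * hn n (X ω) * Z ω) P :=
        int_mul hZ (hAm.mul ((hnm n).comp hX)) 1 (Filter.Eventually.of_forall fun ω => by
          rw [abs_mul]; exact mul_le_one₀ (ind_abs_le _ _) (abs_nonneg _) (hnb _ _))
      refine h1.congr (Filter.Eventually.of_forall fun ω => ?_)
      simp only; ring
    · refine Filter.Eventually.of_forall fun ω => ?_
      refine (le_abs_self _).trans ?_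
      simp only
      rw [abs_mul, abs_mul]
      have h1 := ind_abs_le A ω
      have h2 := hnb n (X ω)
      have h3 := abs_nonneg (Z ω)
      calc |ind A ω| * |Z ω| * |hn n (X ω)| ≤ 1 * |Z ω| * 1 := by gcongr
        _ = |Z ω| := by ring
  have hlim : ∀ ω, Filter.Tendsto (fun n => fn n ω) Filter.atTop
      (nhds (ind A ω * |g (X ω)|)) := by
    intro ω
    obtain ⟨N, hN⟩ := exists_nat_ge |g (X ω)|
    apply tendsto_const_nhds.congr'
    filter_upwards [Filter.eventually_ge_atTop N] with n hn
    have : |g (X ω)| ≤ n := hN.trans (by exact_mod_cast hn)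
    rw [hfe, if_pos this]
  have hres : Integrable (fun ω => ind A ω * |g (X ω)|) P := by
    refine ⟨(hAm.mul (hgm.comp hX).abs).aestronglyMeasurable, ?_⟩
    rw [hasFiniteIntegral_iff_norm]
    have hfat : ∫⁻ ω, ENNReal.ofReal ‖ind A ω * |g (X ω)|‖ ∂P
        ≤ Filter.liminf (fun n => ∫⁻ ω, ENNReal.ofReal (fn n ω) ∂P) Filter.atTop := by
      refine le_trans (lintegral_mono fun ω => ?_)
        (lintegral_liminf_le fun n => (hfm n).ennreal_ofReal)
      rw [Real.norm_of_nonneg (mul_nonneg (ind_nonneg' _ _) (abs_nonneg _))]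
      exact ((ENNReal.continuous_ofReal.tendsto _).comp (hlim ω)).liminf_eq.ge
    refine lt_of_le_of_lt hfat (lt_of_le_of_lt (b := ENNReal.ofReal (∫ ω, |Z ω| ∂P)) ?_
      ENNReal.ofReal_lt_top)
    refine Filter.liminf_le_of_le (by isBoundedDefault) fun b hb => ?_
    obtain ⟨n, hn⟩ := hb.exists
    refine hn.trans ?_
    rw [← ofReal_integral_eq_lintegral_ofReal (hfint n) (Filter.Eventually.of_forall (hf0 n))]
    exact ENNReal.ofReal_le_ofReal (hbound n)
  refine hres.mono (hAm.mul (hgm.comp hX)).aestronglyMeasurable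
    (Filter.Eventually.of_forall fun ω => ?_)
  simp

/-- Uniqueness of conditional means. -/
theorem condMean_unique [MeasurableSpace Ω] [MeasurableSpace 𝓧] {P : Measure Ω}
    {X : Ω → 𝓧} {A : Set Ω} {g1 g2 : 𝓧 → ℝ} (hX : Measurable X)
    (h1m : Measurable g1) (h2m : Measurable g2)
    (h1 : Integrable (fun ω => ind A ω * g1 (X ω)) P)
    (h2 : Integrable (fun ω => ind A ω * g2 (X ω)) P)
    (heq : ∀ h : 𝓧 → ℝ, Measurable h → (∃ C, ∀ x, |h x| ≤ C) →
      ∫ ω, ind A ω * g1 (X ω) * h (X ω) ∂P = ∫ ω, ind A ω * g2 (X ω) * h (X ω) ∂P) :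
    ∀ᵐ ω ∂P, ω ∈ A → g1 (X ω) = g2 (X ω) := by
  have hsm : Measurable fun x => Real.sign (g1 x - g2 x) := meas_sign.comp (h1m.sub h2m)
  have e := heq (fun x => Real.sign (g1 x - g2 x)) hsm ⟨1, fun x => abs_sign_le _⟩
  have hb : ∀ᵐ ω ∂P, |Real.sign (g1 (X ω) - g2 (X ω))| ≤ 1 :=
    Filter.Eventually.of_forall fun ω => abs_sign_le _
  have i1 := int_mul h1 (hsm.comp hX) 1 hb
  have i2 := int_mul h2 (hsm.comp hX) 1 hb
  simp only [Function.comp] at i1 i2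
  have i1' : Integrable (fun ω => ind A ω * g1 (X ω) * Real.sign (g1 (X ω) - g2 (X ω))) P :=
    i1.congr (Filter.Eventually.of_forall fun ω => mul_comm _ _)
  have i2' : Integrable (fun ω => ind A ω * g2 (X ω) * Real.sign (g1 (X ω) - g2 (X ω))) P :=
    i2.congr (Filter.Eventually.of_forall fun ω => mul_comm _ _)
  have hpt : ∀ ω, ind A ω * g1 (X ω) * Real.sign (g1 (X ω) - g2 (X ω))
      - ind A ω * g2 (X ω) * Real.sign (g1 (X ω) - g2 (X ω))
      = ind A ω * |g1 (X ω) - g2 (X ω)| := by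
    intro ω; rw [← mul_sign_abs]; ring
  have hz : ∫ ω, ind A ω * |g1 (X ω) - g2 (X ω)| ∂P = 0 := by
    simp_rw [← hpt]
    rw [integral_sub i1' i2', e, sub_self]
  have hi : Integrable (fun ω => ind A ω * |g1 (X ω) - g2 (X ω)|) P := by
    simp_rw [← hpt]; exact i1'.sub i2'
  have h0 := (integral_eq_zero_iff_of_nonneg
    (fun ω => mul_nonneg (ind_nonneg' A ω) (abs_nonneg _)) hi).1 hz
  filter_upwards [h0] with ω hω hA
  simp only [Pi.zero_apply, ind_of_mem hA, one_mul] at hω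
  exact sub_eq_zero.1 (abs_eq_zero.1 hω)

theorem meas_evD [MeasurableSpace Ω] {D1 D2 : Ω → ℝ} (hD1 : Measurable D1) (hD2 : Measurable D2)
    (d : ℝ × ℝ) : MeasurableSet (evD D1 D2 d) :=
  (hD1 (measurableSet_singleton d.1)).inter (hD2 (measurableSet_singleton d.2))

theorem mar_weights [MeasurableSpace Ω] [MeasurableSpace 𝓧] {P : Measure Ω}
    {X : Ω → 𝓧} {Y0 Y2 D1 D2 S : Ω → ℝ}
    {q : ℝ → 𝓧 → ℝ} (hMAR : MAR P X D1 D2 S Y0 Y2 q)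
    {d : ℝ × ℝ} (hd2 : d.2 ∈ ({0, 1} : Set ℝ))
    {f : ℝ → ℝ} (hf : Measurable f) (hfb : ∃ C, ∀ x, |f x| ≤ C)
    {h : 𝓧 → ℝ} (hh : Measurable h) (hhb : ∃ C, ∀ x, |h x| ≤ C) :
    ∫ ω, ind (evD D1 D2 d) ω * S ω * h (X ω) * f (Y2 ω - Y0 ω) ∂P
      = ∫ ω, ind (evD D1 D2 d) ω * q d.2 (X ω) * h (X ω) * f (Y2 ω - Y0 ω) ∂P := by
  obtain ⟨C, hC⟩ := hfb
  have hm : Measurable (fun p : ℝ × ℝ => ind ({d.1} : Set ℝ) p.1 * f p.2) :=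
    ((meas_ind (measurableSet_singleton d.1)).comp measurable_fst).mul (hf.comp measurable_snd)
  have := hMAR.2.2 d.2 hd2 _ hm ⟨1 * C, fun p => by
    rw [abs_mul]
    exact mul_le_mul (ind_abs_le _ _) (hC _) (abs_nonneg _) zero_le_one⟩ h hh hhb
  have hi : ∀ ω, ind (evD D1 D2 d) ω = ind (evD2 D2 d.2) ω * ind ({d.1} : Set ℝ) (D1 ω) := by
    intro ω
    by_cases h1 : D1 ω = d.1 <;> by_cases h2 : D2 ω = d.2 <;>
      simp [ind, evD, evD2, Set.indicator, h1, h2]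
  convert this using 1
  · refine integral_congr_ae (Filter.Eventually.of_forall fun ω => ?_)
    simp only [hi]; ring
  · refine integral_congr_ae (Filter.Eventually.of_forall fun ω => ?_)
    simp only [hi]; ring

theorem ind_inter_S {S : Ω → ℝ} (hSv : ∀ ω, S ω = 0 ∨ S ω = 1) (A : Set Ω) (ω : Ω) :
    ind (A ∩ {ω | S ω = 1}) ω = ind A ω * S ω := by
  rcases hSv ω with h | h <;> by_cases hA : ω ∈ A <;> simp [ind, Set.indicator, h, hA]

/-- Under MAR the complete-case conditional mean agrees with the full one. -/
theorem complete_case [MeasurableSpace Ω] [MeasurableSpace 𝓧]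
    {P : Measure Ω} [IsProbabilityMeasure P]
    {X : Ω → 𝓧} (hX : Measurable X)
    {Y0 Y2 D1 D2 S : Ω → ℝ}
    (hY0 : Measurable Y0) (hY2 : Measurable Y2)
    (hD1 : Measurable D1) (hD2 : Measurable D2) (hS : Measurable S)
    (hY0i : Integrable Y0 P) (hY2i : Integrable Y2 P)
    (hSv : ∀ ω, S ω = 0 ∨ S ω = 1)
    {q : ℝ → 𝓧 → ℝ} (hMAR : MAR P X D1 D2 S Y0 Y2 q)
    {d : ℝ × ℝ} (hd2 : d.2 ∈ ({0, 1} : Set ℝ)) {mS m : 𝓧 → ℝ}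
    (hmS : IsCondMeanGiven P X (evD D1 D2 d ∩ {ω | S ω = 1}) (fun ω => Y2 ω - Y0 ω) mS)
    (hm : IsCondMeanGiven P X (evD D1 D2 d) (fun ω => Y2 ω - Y0 ω) m) :
    ∀ᵐ ω ∂P, ω ∈ evD D1 D2 d ∩ {ω | S ω = 1} → mS (X ω) = m (X ω) := by
  have hA := meas_evD hD1 hD2 d
  have hAm := meas_ind hA
  have hA1 : MeasurableSet (evD D1 D2 d ∩ {ω | S ω = 1}) :=
    hA.inter (hS (measurableSet_singleton 1))
  have hZm : Measurable (fun ω => Y2 ω - Y0 ω) := hY2.sub hY0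
  have hZ : Integrable (fun ω => Y2 ω - Y0 ω) P := hY2i.sub hY0i
  have hmi := condMean_integrable hX hA hZ hm
  have hqm : Measurable (fun ω => q d.2 (X ω)) := (hMAR.1 d.2 hd2).1.comp hX
  have hqb : ∀ᵐ ω ∂P, |q d.2 (X ω)| ≤ 1 := by
    filter_upwards [hMAR.2.1 d.2 hd2] with ω hω
    rw [abs_of_pos hω.1]; exact hω.2
  have hSb : ∀ ω, |S ω| ≤ 1 := fun ω => by rcases hSv ω with h | h <;> simp [h]
  have hmm : Measurable (fun ω => m (X ω)) := hm.1.comp hX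
  refine condMean_unique hX hmS.1 hm.1 (condMean_integrable hX hA1 hZ hmS) ?_ ?_
  · simp_rw [ind_inter_S hSv]
    refine (int_mul hmi hS 1 (Filter.Eventually.of_forall hSb)).congr
      (Filter.Eventually.of_forall fun ω => ?_)
    simp only; ring
  intro h hh hhb
  rw [← hmS.2 h hh hhb]
  simp_rw [ind_inter_S hSv]
  obtain ⟨C, hC⟩ := hhb
  have hhm : Measurable (fun ω => h (X ω)) := hh.comp hX
  have hSh : ∀ᵐ ω ∂P, |S ω * h (X ω)| ≤ 1 * C := Filter.Eventually.of_forall fun ω => by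
    rw [abs_mul]; exact mul_le_mul (hSb ω) (hC _) (abs_nonneg _) zero_le_one
  have hqh : ∀ᵐ ω ∂P, |q d.2 (X ω) * h (X ω)| ≤ 1 * C := by
    filter_upwards [hqb] with ω hω
    rw [abs_mul]; exact mul_le_mul hω (hC _) (abs_nonneg _) zero_le_one
  have hAZ : Integrable (fun ω => ind (evD D1 D2 d) ω * (Y2 ω - Y0 ω)) P :=
    int_mul hZ hAm 1 (Filter.Eventually.of_forall fun ω => ind_abs_le _ _)
  have iSZ := int_mul hAZ (hS.mul hhm) _ hSh
  have iqZ := int_mul hAZ (hqm.mul hhm) _ hqh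
  have iSm := int_mul hmi (hS.mul hhm) _ hSh
  have iqm := int_mul hmi (hqm.mul hhm) _ hqh
  simp only [Pi.mul_apply] at iSZ iqZ iSm iqm
  have e1 := trunc_ext (P := P) hZm (w1 := fun ω => ind (evD D1 D2 d) ω * S ω * h (X ω))
    (w2 := fun ω => ind (evD D1 D2 d) ω * q d.2 (X ω) * h (X ω))
    ((hAm.mul hS).mul hhm) ((hAm.mul hqm).mul hhm)
    (fun f hf hfb => mar_weights hMAR hd2 hf hfb hh ⟨C, hC⟩) (F := fun x => x) measurable_id
    (iSZ.congr (Filter.Eventually.of_forall fun ω => by simp only; ring))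
    (iqZ.congr (Filter.Eventually.of_forall fun ω => by simp only; ring))
  have e2 := trunc_ext (P := P) hX
    (w1 := fun ω => ind (evD D1 D2 d) ω * (Y2 ω - Y0 ω))
    (w2 := fun ω => ind (evD D1 D2 d) ω * m (X ω))
    (hAm.mul hZm) (hAm.mul hmm)
    (fun f hf hfb => hm.2 f hf hfb)
    (F := fun x => q d.2 x * h x) ((hMAR.1 d.2 hd2).1.mul hh)
    (iqZ.congr (Filter.Eventually.of_forall fun ω => by simp only; ring))
    (iqm.congr (Filter.Eventually.of_forall fun ω => by simp only; ring))
  have e3 := trunc_ext (P := P) hX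
    (w1 := fun ω => ind (evD D1 D2 d) ω * S ω)
    (w2 := fun ω => ind (evD D1 D2 d) ω * q d.2 (X ω))
    (hAm.mul hS) (hAm.mul hqm)
    (fun f hf hfb => by
      have := mar_weights hMAR hd2 (f := fun _ => 1) measurable_const ⟨1, by simp⟩ hf hfb
      simpa using this)
    (F := fun x => m x * h x) (hm.1.mul hh)
    (iSm.congr (Filter.Eventually.of_forall fun ω => by simp only; ring))
    (iqm.congr (Filter.Eventually.of_forall fun ω => by simp only; ring))
  calc ∫ ω, ind (evD D1 D2 d) ω * S ω * (Y2 ω - Y0 ω) * h (X ω) ∂P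
      = ∫ ω, ind (evD D1 D2 d) ω * S ω * h (X ω) * (Y2 ω - Y0 ω) ∂P := by
        congr 1; ext ω; ring
    _ = _ := e1
    _ = ∫ ω, ind (evD D1 D2 d) ω * (Y2 ω - Y0 ω) * (q d.2 (X ω) * h (X ω)) ∂P := by
        congr 1; ext ω; ring
    _ = _ := e2
    _ = ∫ ω, ind (evD D1 D2 d) ω * q d.2 (X ω) * (m (X ω) * h (X ω)) ∂P := by
        congr 1; ext ω; ring
    _ = _ := e3.symm
    _ = _ := by congr 1; ext ω; ring

/-- Under DID the conditional mean of the outcome change. -/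
theorem did_mean [MeasurableSpace Ω] [MeasurableSpace 𝓧]
    {P : Measure Ω} [IsProbabilityMeasure P]
    {X : Ω → 𝓧} (hX : Measurable X)
    {Y0 Y2 D1 D2 : Ω → ℝ}
    (hD1 : Measurable D1) (hD2 : Measurable D2)
    {Y0p Y2p : ℝ × ℝ → Ω → ℝ} {d : ℝ × ℝ}
    (a0 : Integrable (Y0p (0, 0)) P) (a2 : Integrable (Y2p (0, 0)) P)
    (b0 : Integrable (Y0p d) P) (b2 : Integrable (Y2p d) P)
    (hcons0 : ∀ ω, Y0 ω = Y0p (D1 ω, D2 ω) ω)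
    (hcons2 : ∀ ω, Y2 ω = Y2p (D1 ω, D2 ω) ω)
    (hna : ∀ h : 𝓧 → ℝ, Measurable h → (∃ C, ∀ x, |h x| ≤ C) →
      ∫ ω, ind (evD D1 D2 d) ω * Y0p d ω * h (X ω) ∂P
        = ∫ ω, ind (evD D1 D2 d) ω * Y0p (0, 0) ω * h (X ω) ∂P)
    {tr g : 𝓧 → ℝ}
    (htr : IsCondMeanGiven P X (evD D1 D2 d) (fun ω => Y2p (0, 0) ω - Y0p (0, 0) ω) tr)
    (hg : IsCondMeanGiven P X (evD D1 D2 d) (fun ω => Y2p d ω - Y2p (0, 0) ω) g) :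
    IsCondMeanGiven P X (evD D1 D2 d) (fun ω => Y2 ω - Y0 ω) (fun x => tr x + g x) := by
  have hA := meas_evD hD1 hD2 d
  have hAm := meas_ind hA
  refine ⟨htr.1.add hg.1, fun h hh hhb => ?_⟩
  have i1 := condMean_integrable hX hA (a2.sub a0) htr
  have i2 := condMean_integrable hX hA (b2.sub a2) hg
  have t1 := htr.2 h hh hhb
  have t2 := hg.2 h hh hhb
  have t3 := hna h hh hhb
  obtain ⟨C, hC⟩ := hhb
  have hhm : Measurable (fun ω => h (X ω)) := hh.comp hX
  have hb : ∀ᵐ ω ∂P, |h (X ω)| ≤ C := Filter.Eventually.of_forall fun ω => hC _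
  have key : ∀ Z : Ω → ℝ, Integrable Z P →
      Integrable (fun ω => ind (evD D1 D2 d) ω * Z ω * h (X ω)) P := fun Z hZ =>
    (int_mul (int_mul hZ hAm 1 (Filter.Eventually.of_forall fun ω => ind_abs_le _ _))
      hhm C hb).congr (Filter.Eventually.of_forall fun ω => mul_comm _ _)
  have j1 : Integrable (fun ω => ind (evD D1 D2 d) ω * tr (X ω) * h (X ω)) P :=
    (int_mul i1 hhm C hb).congr (Filter.Eventually.of_forall fun ω => mul_comm _ _)
  have j2 : Integrable (fun ω => ind (evD D1 D2 d) ω * g (X ω) * h (X ω)) P :=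
    (int_mul i2 hhm C hb).congr (Filter.Eventually.of_forall fun ω => mul_comm _ _)
  have r : ∫ ω, ind (evD D1 D2 d) ω * (tr (X ω) + g (X ω)) * h (X ω) ∂P
      = ∫ ω, ind (evD D1 D2 d) ω * tr (X ω) * h (X ω) ∂P
        + ∫ ω, ind (evD D1 D2 d) ω * g (X ω) * h (X ω) ∂P := by
    rw [← integral_add j1 j2]; congr 1; ext ω; ring
  have l : ∫ ω, ind (evD D1 D2 d) ω * (Y2 ω - Y0 ω) * h (X ω) ∂P
      = ∫ ω, ind (evD D1 D2 d) ω * Y2p d ω * h (X ω) ∂P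
        - ∫ ω, ind (evD D1 D2 d) ω * Y0p d ω * h (X ω) ∂P := by
    rw [← integral_sub (key _ b2) (key _ b0)]; congr 1; ext ω
    by_cases hω : ω ∈ evD D1 D2 d
    · have : (D1 ω, D2 ω) = d := Prod.ext hω.1 hω.2
      rw [hcons0, hcons2, this]; ring
    · simp [ind_of_not_mem hω]
  have s1 : ∫ ω, ind (evD D1 D2 d) ω * (Y2p (0, 0) ω - Y0p (0, 0) ω) * h (X ω) ∂P
      = ∫ ω, ind (evD D1 D2 d) ω * Y2p (0, 0) ω * h (X ω) ∂P
        - ∫ ω, ind (evD D1 D2 d) ω * Y0p (0, 0) ω * h (X ω) ∂P := by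
    rw [← integral_sub (key _ a2) (key _ a0)]; congr 1; ext ω; ring
  have s2 : ∫ ω, ind (evD D1 D2 d) ω * (Y2p d ω - Y2p (0, 0) ω) * h (X ω) ∂P
      = ∫ ω, ind (evD D1 D2 d) ω * Y2p d ω * h (X ω) ∂P
        - ∫ ω, ind (evD D1 D2 d) ω * Y2p (0, 0) ω * h (X ω) ∂P := by
    rw [← integral_sub (key _ b2) (key _ a2)]; congr 1; ext ω; ring
  rw [r, l]
  linarith

theorem null_of_ind [MeasurableSpace Ω] {P : Measure Ω} {f : Ω → ℝ} {B : Set Ω}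
    (hpos : ∀ᵐ ω ∂P, 0 < f ω) (hi : Integrable (fun ω => ind B ω * f ω) P)
    (h0 : ∫ ω, ind B ω * f ω ∂P = 0) : ∀ᵐ ω ∂P, ω ∉ B := by
  have := (integral_eq_zero_iff_of_nonneg_ae (by
    filter_upwards [hpos] with ω hω
    exact mul_nonneg (ind_nonneg' _ _) hω.le) hi).1 h0
  filter_upwards [this, hpos] with ω h1 h2 hB
  simp only [Pi.zero_apply, ind_of_mem hB, one_mul] at h1
  exact h2.ne' h1

/-- An X-measurable property holding a.s. on complete cases of a path holds a.s. -/
theorem spread [MeasurableSpace Ω] [MeasurableSpace 𝓧]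
    {P : Measure Ω} [IsProbabilityMeasure P]
    {X : Ω → 𝓧} (hX : Measurable X)
    {Y0 Y2 D1 D2 S : Ω → ℝ}
    (hD1 : Measurable D1) (hD2 : Measurable D2)
    (hSv : ∀ ω, S ω = 0 ∨ S ω = 1)
    {q : ℝ → 𝓧 → ℝ} (hMAR : MAR P X D1 D2 S Y0 Y2 q)
    {d : ℝ × ℝ} (hd2 : d.2 ∈ ({0, 1} : Set ℝ)) {p : 𝓧 → ℝ}
    (hp : IsCondMeanGiven P X Set.univ (ind (evD D1 D2 d)) p)
    (hppos : ∀ᵐ ω ∂P, 0 < p (X ω)) {N : Set 𝓧} (hN : MeasurableSet N)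
    (hz : ∀ᵐ ω ∂P, ω ∈ evD D1 D2 d ∩ {ω | S ω = 1} → X ω ∉ N) :
    ∀ᵐ ω ∂P, X ω ∉ N := by
  have hA := meas_evD hD1 hD2 d
  have hAm := meas_ind hA
  have hNm := meas_ind hN
  have hXN : Measurable (fun ω => ind N (X ω)) := hNm.comp hX
  have hNb : ∃ C, ∀ x, |ind N x| ≤ C := ⟨1, ind_abs_le N⟩
  have hqm : Measurable (fun ω => q d.2 (X ω)) := (hMAR.1 d.2 hd2).1.comp hX
  have hq := hMAR.2.1 d.2 hd2
  have e := mar_weights hMAR hd2 (f := fun _ => 1) measurable_const ⟨1, by simp⟩ hNm hNb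
  simp only [mul_one] at e
  have e0 : ∫ ω, ind (evD D1 D2 d) ω * S ω * ind N (X ω) ∂P = 0 := by
    apply integral_eq_zero_of_ae
    filter_upwards [hz] with ω hω
    rw [← ind_inter_S hSv]
    by_cases h : ω ∈ evD D1 D2 d ∩ {ω | S ω = 1}
    · simp [ind_of_not_mem (hω h)]
    · simp [ind_of_not_mem h]
  rw [e0] at e
  have hpt : ∀ ω, ind (evD D1 D2 d ∩ X ⁻¹' N) ω = ind (evD D1 D2 d) ω * ind N (X ω) := by
    intro ω
    by_cases h1 : ω ∈ evD D1 D2 d <;> by_cases h2 : X ω ∈ N <;> simp [ind, Set.indicator, h1, h2]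
  have hBm : MeasurableSet (evD D1 D2 d ∩ X ⁻¹' N) := hA.inter (hX hN)
  have n1 : ∀ᵐ ω ∂P, ω ∉ evD D1 D2 d ∩ X ⁻¹' N := by
    refine null_of_ind (f := fun ω => q d.2 (X ω)) (hq.mono fun ω h => h.1) ?_ ?_
    · refine Integrable.of_bound ((meas_ind hBm).mul hqm).aestronglyMeasurable 1 ?_
      filter_upwards [hq] with ω hω
      rw [Real.norm_eq_abs, abs_mul]
      refine mul_le_one₀ (ind_abs_le _ _) (abs_nonneg _) ?_
      rw [abs_of_pos hω.1]; exact hω.2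
    · rw [e]; congr 1; ext ω; rw [hpt]; ring
  have hindi : Integrable (ind (evD D1 D2 d)) P :=
    Integrable.of_bound hAm.aestronglyMeasurable 1
      (Filter.Eventually.of_forall fun ω => ind_abs_le _ _)
  have hpi := condMean_integrable hX MeasurableSet.univ hindi hp
  have ep := hp.2 _ hNm hNb
  have hu : ∀ ω : Ω, ind (Set.univ : Set Ω) ω = 1 := fun ω => ind_of_mem (Set.mem_univ ω)
  simp only [hu, one_mul] at ep hpi
  have z : ∫ ω, ind (evD D1 D2 d) ω * ind N (X ω) ∂P = 0 := by
    apply integral_eq_zero_of_ae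
    filter_upwards [n1] with ω hω
    rw [← hpt, ind_of_not_mem hω]; rfl
  rw [z] at ep
  have hX1 : ∀ ω, ind (X ⁻¹' N) ω = ind N (X ω) := fun ω => by
    simp [ind, Set.indicator]
  refine null_of_ind (B := X ⁻¹' N) hppos
    (int_mul hpi (meas_ind (hX hN)) 1 (Filter.Eventually.of_forall fun ω => ind_abs_le _ _)) ?_
  rw [ep]; congr 1; ext ω; rw [hX1]; ring

/-- Proposition 2: bias of the complete-case DID estimand. -/
theorem statement_1
    [MeasurableSpace Ω] [m𝓧 : MeasurableSpace 𝓧]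
    (P : Measure Ω) [IsProbabilityMeasure P]
    (X : Ω → 𝓧) (hX : Measurable X)
    (Y0 Y2 D1 D2 S : Ω → ℝ)
    (hY0 : Measurable Y0) (hY2 : Measurable Y2)
    (hD1 : Measurable D1) (hD2 : Measurable D2) (hS : Measurable S)
    (hY0i : Integrable Y0 P) (hY2i : Integrable Y2 P)
    (hD1v : ∀ ω, D1 ω = 0 ∨ D1 ω = 1) (hD2v : ∀ ω, D2 ω = 0 ∨ D2 ω = 1)
    (hSv : ∀ ω, S ω = 0 ∨ S ω = 1)
    (Y0p Y2p : ℝ × ℝ → Ω → ℝ)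
    (hY0p : ∀ e ∈ allPaths, Measurable (Y0p e) ∧ Integrable (Y0p e) P)
    (hY2p : ∀ e ∈ allPaths, Measurable (Y2p e) ∧ Integrable (Y2p e) P)
    (hcons0 : ∀ ω, Y0 ω = Y0p (D1 ω, D2 ω) ω)
    (hcons2 : ∀ ω, Y2 ω = Y2p (D1 ω, D2 ω) ω)
    (d : ℝ × ℝ) (hd : d ∈ threePaths)
    (hDIDd : DID P X D1 D2 Y0p Y2p d) (hDIDd' : DID P X D1 D2 Y0p Y2p (0, 0))
    (q : ℝ → 𝓧 → ℝ) (hMAR : MAR P X D1 D2 S Y0 Y2 q)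
    (pd pd' : 𝓧 → ℝ)
    (hpd : IsCondMeanGiven P X Set.univ (ind (evD D1 D2 d)) pd)
    (hpd' : IsCondMeanGiven P X Set.univ (ind (evD D1 D2 (0, 0))) pd')
    (hpdpos : ∀ᵐ ω ∂P, 0 < pd (X ω)) (hpd'pos : ∀ᵐ ω ∂P, 0 < pd' (X ω))
    (hdS1 : 0 < P (evD D1 D2 d ∩ {ω | S ω = 1}))
    (hdS0 : 0 < P (evD D1 D2 d ∩ {ω | S ω = 0}))
    (hd'S1 : 0 < P (evD D1 D2 (0, 0) ∩ {ω | S ω = 1}))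
    (g : 𝓧 → ℝ)
    (hg : IsCondMeanGiven P X (evD D1 D2 d) (fun ω => Y2p d ω - Y2p (0, 0) ω) g)
    (mS mS' : 𝓧 → ℝ)
    (hmS : IsCondMeanGiven P X (evD D1 D2 d ∩ {ω | S ω = 1}) (fun ω => Y2 ω - Y0 ω) mS)
    (hmS' : IsCondMeanGiven P X (evD D1 D2 (0, 0) ∩ {ω | S ω = 1}) (fun ω => Y2 ω - Y0 ω) mS')
    (hfin1 : Integrable (fun ω => S ω * ind (evD D1 D2 d) ω * (mS (X ω) - mS' (X ω))) P)
    (hfin2 : Integrable (fun ω => g (X ω)) P) :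
    (∫ ω, S ω * ind (evD D1 D2 d) ω ∂P)⁻¹
        * ∫ ω, S ω * ind (evD D1 D2 d) ω * (mS (X ω) - mS' (X ω)) ∂P
      = tau P D1 D2 Y2p d
        + (P (evD D1 D2 d ∩ {ω | S ω = 0})).toReal / (P (evD D1 D2 d)).toReal
          * ((P (evD D1 D2 d ∩ {ω | S ω = 1})).toReal⁻¹
                * ∫ ω in evD D1 D2 d ∩ {ω | S ω = 1}, g (X ω) ∂P
              - (P (evD D1 D2 d ∩ {ω | S ω = 0})).toReal⁻¹
                * ∫ ω in evD D1 D2 d ∩ {ω | S ω = 0}, g (X ω) ∂P) := by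
  have hd2 : d.2 ∈ ({0, 1} : Set ℝ) := by
    simp only [threePaths, Set.mem_insert_iff, Set.mem_singleton_iff] at hd
    rcases hd with h | h | h <;> simp [h]
  have hdall : d ∈ allPaths := by
    simp only [threePaths, Set.mem_insert_iff, Set.mem_singleton_iff] at hd
    rcases hd with h | h | h <;> simp [h, allPaths]
  have h0all : ((0, 0) : ℝ × ℝ) ∈ allPaths := by simp [allPaths]
  have a0 := (hY0p _ h0all).2
  have a2 := (hY2p _ h0all).2
  have b0 := (hY0p _ hdall).2
  have b2 := (hY2p _ hdall).2
  obtain ⟨hna, tr, htrU, htr⟩ := hDIDd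
  obtain ⟨hna', tr', htrU', htr'⟩ := hDIDd'
  have hA := meas_evD hD1 hD2 d
  have hAm := meas_ind hA
  have hm := did_mean hX hD1 hD2 a0 a2 b0 b2 hcons0 hcons2 hna htr hg
  have hm' := did_mean (g := fun _ => 0) hX hD1 hD2 a0 a2 a0 a2 hcons0 hcons2 hna' htr'
    ⟨measurable_const, fun h _ _ => by simp⟩
  have c := complete_case hX hY0 hY2 hD1 hD2 hS hY0i hY2i hSv hMAR hd2 hmS hm
  have c' := complete_case hX hY0 hY2 hD1 hD2 hS hY0i hY2i hSv hMAR (by simp) hmS' hm'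
  have htt : ∀ᵐ ω ∂P, ω ∈ (Set.univ : Set Ω) → tr (X ω) = tr' (X ω) :=
    condMean_unique hX htrU.1 htrU'.1
      (condMean_integrable hX MeasurableSet.univ (a2.sub a0) htrU)
      (condMean_integrable hX MeasurableSet.univ (a2.sub a0) htrU')
      (fun h hh hhb => (htrU.2 h hh hhb).symm.trans (htrU'.2 h hh hhb))
  have hsp := spread hX hD1 hD2 hSv hMAR (d := (0, 0)) (by simp) hpd' hpd'pos
    (N := {x | mS' x = tr' x + 0}ᶜ)
    (measurableSet_eq_fun hmS'.1 hm'.1).compl (by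
      filter_upwards [c'] with ω h hω
      simpa using h hω)
  have hae : ∀ᵐ ω ∂P, S ω * ind (evD D1 D2 d) ω * (mS (X ω) - mS' (X ω))
      = ind (evD D1 D2 d ∩ {ω | S ω = 1}) ω * g (X ω) := by
    filter_upwards [c, htt, hsp] with ω h1 h2 h3
    by_cases hω : ω ∈ evD D1 D2 d ∩ {ω | S ω = 1}
    · have h4 := h1 hω
      have h5 := h2 trivial
      have h6 : mS' (X ω) = tr' (X ω) + 0 := by simpa using h3
      rw [h4, h6, h5, ind_inter_S hSv]; ring
    · have := ind_inter_S hSv (evD D1 D2 d) ω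
      rw [ind_of_not_mem hω] at this
      rw [ind_of_not_mem hω, mul_comm (S ω), ← this]; ring
  have hA1 : MeasurableSet (evD D1 D2 d ∩ {ω | S ω = 1}) :=
    hA.inter (hS (measurableSet_singleton 1))
  have hA0 : MeasurableSet (evD D1 D2 d ∩ {ω | S ω = 0}) :=
    hA.inter (hS (measurableSet_singleton 0))
  have hindset : ∀ (B : Set Ω), MeasurableSet B → ∀ f : Ω → ℝ,
      ∫ ω, ind B ω * f ω ∂P = ∫ ω in B, f ω ∂P := by
    intro B hB f
    rw [← integral_indicator hB]; congr 1; ext ω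
    by_cases h : ω ∈ B <;> simp [ind, h]
  have hI : ∫ ω, S ω * ind (evD D1 D2 d) ω ∂P
      = (P (evD D1 D2 d ∩ {ω | S ω = 1})).toReal := by
    have := hindset _ hA1 (fun _ => 1)
    simp only [mul_one, integral_const, smul_eq_mul, measureReal_restrict_apply_univ] at this
    rw [← measureReal_def, ← this]
    congr 1; ext ω; rw [ind_inter_S hSv, mul_comm]
  have hdisj : Disjoint (evD D1 D2 d ∩ {ω | S ω = 1}) (evD D1 D2 d ∩ {ω | S ω = 0}) := by
    rw [Set.disjoint_left]
    rintro ω ⟨_, h1⟩ ⟨_, h0⟩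
    simp only [Set.mem_ofPred_eq] at h1 h0
    rw [h1] at h0; exact one_ne_zero h0
  have hun : evD D1 D2 d = (evD D1 D2 d ∩ {ω | S ω = 1}) ∪ (evD D1 D2 d ∩ {ω | S ω = 0}) := by
    ext ω
    rcases hSv ω with h | h <;> simp [h]
  have htau : ∫ ω in evD D1 D2 d, (Y2p d ω - Y2p (0, 0) ω) ∂P
      = ∫ ω in evD D1 D2 d ∩ {ω | S ω = 1}, g (X ω) ∂P
        + ∫ ω in evD D1 D2 d ∩ {ω | S ω = 0}, g (X ω) ∂P := by
    rw [← setIntegral_union hdisj hA0 hfin2.integrableOn hfin2.integrableOn, ← hun,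
      ← hindset _ hA, ← hindset _ hA]
    simpa using hg.2 (fun _ => 1) measurable_const ⟨1, by simp⟩
  have hPA : (P (evD D1 D2 d)).toReal = (P (evD D1 D2 d ∩ {ω | S ω = 1})).toReal
      + (P (evD D1 D2 d ∩ {ω | S ω = 0})).toReal := by
    conv_lhs => rw [hun]
    rw [measure_union hdisj hA0, ENNReal.toReal_add (measure_ne_top _ _) (measure_ne_top _ _)]
  have p1 := ENNReal.toReal_pos hdS1.ne' (measure_ne_top _ _)
  have p0 := ENNReal.toReal_pos hdS0.ne' (measure_ne_top _ _)
  rw [integral_congr_ae hae, hindset _ hA1, hI, tau, htau, hPA]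
  generalize (P (evD D1 D2 d ∩ {ω | S ω = 1})).toReal = P1 at *
  generalize (P (evD D1 D2 d ∩ {ω | S ω = 0})).toReal = P0 at *
  have : P1 + P0 ≠ 0 := by positivity
  field_simp
  ring

end DIDMissing
end
end

section
/- Fix a path d = (d1,d2). Suppose Assumption MAR holds, P(D = d, S = 1) > 0, P(D2 = d2 | X) > 0 a.s., and P(D1 = d1 | D2 = d2, X) > 0 a.s. under the law of X given D2 = d2. Then the conditional outcome mean is identified from the observed subsample: m_d(X) = E[ΔY | D = d, S = 1, X] a.s. under the law of X given D = d (equivalently, given (D = d, S = 1)). -/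
open MeasureTheory Set
open scoped Classical

noncomputable section

namespace DIDMissing

variable {Ω : Type*} {𝓧 : Type*}

/-- Lemma 1.1: identification of the conditional outcome mean from the observed subsample. -/
theorem statement_2
    [MeasurableSpace Ω] [m𝓧 : MeasurableSpace 𝓧]
    (P : Measure Ω) [IsProbabilityMeasure P]
    (X : Ω → 𝓧) (hX : Measurable X)
    (Y0 Y2 D1 D2 S : Ω → ℝ)
    (hY0 : Measurable Y0) (hY2 : Measurable Y2)
    (hD1 : Measurable D1) (hD2 : Measurable D2) (hS : Measurable S)
    (hY0i : Integrable Y0 P) (hY2i : Integrable Y2 P)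
    (hD1v : ∀ ω, D1 ω = 0 ∨ D1 ω = 1) (hD2v : ∀ ω, D2 ω = 0 ∨ D2 ω = 1)
    (hSv : ∀ ω, S ω = 0 ∨ S ω = 1)
    (d : ℝ × ℝ) (hd : d ∈ allPaths)
    (q : ℝ → 𝓧 → ℝ) (hMAR : MAR P X D1 D2 S Y0 Y2 q)
    (hdS1 : 0 < P (evD D1 D2 d ∩ {ω | S ω = 1}))
    (pD2d : 𝓧 → ℝ)
    (hpD2d : IsCondMeanGiven P X Set.univ (ind (evD2 D2 d.2)) pD2d)
    (hpD2dpos : ∀ᵐ ω ∂P, 0 < pD2d (X ω))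
    (pc : 𝓧 → ℝ)
    (hpc : IsCondMeanGiven P X (evD2 D2 d.2) (ind {ω | D1 ω = d.1}) pc)
    (hpcpos : ∀ᵐ ω ∂(P.restrict (evD2 D2 d.2)), 0 < pc (X ω))
    (md mdS : 𝓧 → ℝ)
    (hmd : IsCondMeanGiven P X (evD D1 D2 d) (fun ω => Y2 ω - Y0 ω) md)
    (hmdS : IsCondMeanGiven P X (evD D1 D2 d ∩ {ω | S ω = 1}) (fun ω => Y2 ω - Y0 ω) mdS) :
    ∀ᵐ ω ∂(P.restrict (evD D1 D2 d)), md (X ω) = mdS (X ω) := by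
  obtain ⟨hM1, hM2, hM3⟩ := hMAR
  have hd2 : d.2 ∈ ({0, 1} : Set ℝ) := by
    simp only [allPaths, Set.mem_insert_iff, Set.mem_singleton_iff] at hd
    rcases hd with h | h | h | h <;> simp [h]
  have hqm : Measurable (q d.2) := (hM1 _ hd2).1
  have hq := hM2 _ hd2
  have hM := hM3 _ hd2
  obtain ⟨hmdm, hmdI⟩ := hmd
  obtain ⟨hmSm, hmSI⟩ := hmdS
  have hAm : MeasurableSet (evD D1 D2 d) :=
    (measurableSet_eq_fun hD1 measurable_const).inter (measurableSet_eq_fun hD2 measurable_const)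
  have hEm : MeasurableSet (evD2 D2 d.2) := measurableSet_eq_fun hD2 measurable_const
  have hindA : Measurable (ind (evD D1 D2 d)) := measurable_const.indicator hAm
  have hindE : Measurable (ind (evD2 D2 d.2)) := measurable_const.indicator hEm
  set Z : Ω → ℝ := fun ω => Y2 ω - Y0 ω with hZ
  have hZm : Measurable Z := hY2.sub hY0
  have hZi : Integrable Z P := hY2i.sub hY0i
  have ind01 : ∀ (A : Set Ω) ω, |ind A ω| ≤ 1 := by
    intro A ω
    by_cases h : ω ∈ A <;> simp [ind, h]
  have hS1 : ∀ ω, |S ω| ≤ 1 := by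
    intro ω; rcases hSv ω with h | h <;> simp [h]
  -- bounded version of q
  obtain ⟨Q, hQm, hQb, hQq⟩ : ∃ Q : 𝓧 → ℝ, Measurable Q ∧ (∀ x, |Q x| ≤ 1) ∧
      ∀ᵐ ω ∂P, q d.2 (X ω) = Q (X ω) := by
    refine ⟨fun x => max 0 (min (q d.2 x) 1), by fun_prop, ?_, ?_⟩
    · intro x
      rw [abs_of_nonneg (le_max_left _ _)]
      exact max_le zero_le_one (min_le_right _ _)
    · filter_upwards [hq] with ω h
      rw [min_eq_left h.2, max_eq_right h.1.le]
  -- MAR, unbounded version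
  have key1 : ∀ h : 𝓧 → ℝ, Measurable h → (∃ C, ∀ x, |h x| ≤ C) →
      ∫ ω, ind (evD D1 D2 d ∩ {ω | S ω = 1}) ω * Z ω * h (X ω) ∂P
        = ∫ ω, ind (evD D1 D2 d) ω * Z ω * (Q (X ω) * h (X ω)) ∂P := by
    rintro h hm ⟨C, hC⟩
    have hC0 : ∀ ω, |h (X ω)| ≤ C := fun ω => hC _
    let f : ℕ → ℝ × ℝ → ℝ := fun k p => if p.1 = d.1 then max (-(k:ℝ)) (min p.2 k) else 0
    have hfm : ∀ k, Measurable (f k) := by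
      intro k
      refine Measurable.ite (measurableSet_eq_fun measurable_fst measurable_const) (by fun_prop)
        measurable_const
    have hcl : ∀ (k : ℕ) (z : ℝ), |max (-(k:ℝ)) (min z k)| ≤ k := by
      intro k z
      have hk : (0:ℝ) ≤ k := Nat.cast_nonneg k
      rw [abs_le]
      exact ⟨le_max_left _ _, max_le (by linarith) (min_le_right _ _)⟩
    have hcz : ∀ (k : ℕ) (z : ℝ), |max (-(k:ℝ)) (min z k)| ≤ |z| := by
      intro k z
      have hk : (0:ℝ) ≤ k := Nat.cast_nonneg k
      rw [abs_le]
      constructor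
      · refine le_max_of_le_right (le_min (neg_abs_le z) ?_)
        have := abs_nonneg z
        linarith
      · refine max_le ?_ ((min_le_left _ _).trans (le_abs_self z))
        have := abs_nonneg z
        linarith
    have hfb : ∀ k, ∃ C, ∀ p, |f k p| ≤ C := by
      intro k
      refine ⟨k, fun p => ?_⟩
      by_cases hp : p.1 = d.1
      · simp only [f, hp, if_true]; exact hcl _ _
      · simp [f, hp]
    have hfz : ∀ k p, |f k p| ≤ |p.2| := by
      intro k p
      by_cases hp : p.1 = d.1
      · simp only [f, hp, if_true]; exact hcz _ _
      · simp [f, hp]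
    have hflim : ∀ p : ℝ × ℝ, ∀ᶠ k in Filter.atTop, f k p = if p.1 = d.1 then p.2 else 0 := by
      intro p
      obtain ⟨n, hn⟩ := exists_nat_ge |p.2|
      filter_upwards [Filter.eventually_ge_atTop n] with k hk
      have hk' : |p.2| ≤ k := hn.trans (by exact_mod_cast hk)
      rw [abs_le] at hk'
      simp only [f]
      rw [min_eq_left hk'.2, max_eq_right hk'.1]
    have lim : ∀ W : Ω → ℝ, Measurable W → (∀ ω, |W ω| ≤ 1) →
        Filter.Tendsto (fun k => ∫ ω, ind (evD2 D2 d.2) ω * W ω * f k (D1 ω, Z ω) * h (X ω) ∂P)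
          Filter.atTop (nhds (∫ ω, ind (evD2 D2 d.2) ω * W ω *
            (if D1 ω = d.1 then Z ω else 0) * h (X ω) ∂P)) := by
      intro W hW hW1
      refine tendsto_integral_of_dominated_convergence (fun ω => |Z ω| * C) ?_
        (hZi.abs.mul_const C) ?_ ?_
      · intro k
        have : Measurable fun ω => f k (D1 ω, Z ω) := (hfm k).comp (hD1.prodMk hZm)
        have h2 : Measurable fun ω => h (X ω) := hm.comp hX
        exact (((hindE.mul hW).mul this).mul h2).aestronglyMeasurable
      · intro k
        refine Filter.Eventually.of_forall fun ω => ?_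
        rw [Real.norm_eq_abs, abs_mul, abs_mul, abs_mul]
        have h1 : |ind (evD2 D2 d.2) ω| * |W ω| ≤ 1 :=
          mul_le_one₀ (ind01 _ _) (abs_nonneg _) (hW1 ω)
        have h2 := hfz k (D1 ω, Z ω)
        have h3 : |ind (evD2 D2 d.2) ω| * |W ω| * |f k (D1 ω, Z ω)| ≤ 1 * |Z ω| :=
          mul_le_mul h1 h2 (abs_nonneg _) zero_le_one
        rw [one_mul] at h3
        exact mul_le_mul h3 (hC0 ω) (abs_nonneg _) (abs_nonneg _)
      · refine Filter.Eventually.of_forall fun ω => ?_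
        refine tendsto_const_nhds.congr' ?_
        filter_upwards [hflim (D1 ω, Z ω)] with k hk
        rw [hk]
    have l1 := lim S hS hS1
    have l2 := lim (fun ω => Q (X ω)) (hQm.comp hX) (fun ω => hQb _)
    have hk : ∀ k, ∫ ω, ind (evD2 D2 d.2) ω * S ω * f k (D1 ω, Z ω) * h (X ω) ∂P
        = ∫ ω, ind (evD2 D2 d.2) ω * Q (X ω) * f k (D1 ω, Z ω) * h (X ω) ∂P := by
      intro k
      refine (hM (f k) (hfm k) (hfb k) h hm ⟨C, hC⟩).trans (integral_congr_ae ?_)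
      filter_upwards [hQq] with ω hω
      rw [hω]
    have heq := tendsto_nhds_unique (l1.congr hk) l2
    refine (integral_congr_ae (Filter.Eventually.of_forall fun ω => ?_)).trans
      (heq.trans (integral_congr_ae (Filter.Eventually.of_forall fun ω => ?_)))
    · by_cases h1 : D1 ω = d.1 <;> by_cases h2 : D2 ω = d.2 <;> rcases hSv ω with h3 | h3 <;>
        simp [ind, evD, evD2, h1, h2, h3]
    · by_cases h1 : D1 ω = d.1 <;> by_cases h2 : D2 ω = d.2 <;>
        simp [ind, evD, evD2, h1, h2]
      ring
  have key2 : ∀ h : 𝓧 → ℝ, Measurable h → (∃ C, ∀ x, |h x| ≤ C) →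
      ∫ ω, ind (evD D1 D2 d ∩ {ω | S ω = 1}) ω * h (X ω) ∂P
        = ∫ ω, ind (evD D1 D2 d) ω * (Q (X ω) * h (X ω)) ∂P := by
    intro h hm hC
    have := hM (fun p => if p.1 = d.1 then 1 else 0)
      (Measurable.ite (measurableSet_eq_fun measurable_fst measurable_const) measurable_const
        measurable_const) ⟨1, fun p => by by_cases hp : p.1 = d.1 <;> simp [hp]⟩ h hm hC
    refine (integral_congr_ae (Filter.Eventually.of_forall fun ω => ?_)).trans
      (this.trans (integral_congr_ae ?_))
    · by_cases h1 : D1 ω = d.1 <;> by_cases h2 : D2 ω = d.2 <;> rcases hSv ω with h3 | h3 <;>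
        simp [ind, evD, evD2, h1, h2, h3]
    · filter_upwards [hQq] with ω hω
      rw [hω]
      by_cases h1 : D1 ω = d.1 <;> by_cases h2 : D2 ω = d.2 <;>
        simp [ind, evD, evD2, h1, h2]
  -- localisation
  have main : ∀ n : ℕ, ∀ᵐ ω ∂P, ω ∈ evD D1 D2 d → |md (X ω)| ≤ n → |mdS (X ω)| ≤ n →
      md (X ω) = mdS (X ω) := by
    intro n
    let G : Set 𝓧 := {x | |md x| ≤ n ∧ |mdS x| ≤ n}
    have hG : MeasurableSet G :=
      (measurableSet_le hmdm.abs measurable_const).inter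
        (measurableSet_le hmSm.abs measurable_const)
    let h : 𝓧 → ℝ := G.indicator (fun x => md x - mdS x)
    have hm : Measurable h := (hmdm.sub hmSm).indicator hG
    have hn0 : (0:ℝ) ≤ n := Nat.cast_nonneg n
    have hb : ∀ x, |h x| ≤ 2 * n := by
      intro x
      by_cases hx : x ∈ G
      · simp only [h, Set.indicator_of_mem hx]
        have := abs_sub (md x) (mdS x)
        have h1 := hx.1
        have h2 := hx.2
        linarith
      · simp only [h, Set.indicator_of_notMem hx, abs_zero]; linarith
    have hbS : ∀ x, |mdS x * h x| ≤ n * (2 * n) := by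
      intro x
      by_cases hx : x ∈ G
      · rw [abs_mul]
        exact mul_le_mul hx.2 (hb x) (abs_nonneg _) hn0
      · simp only [h, Set.indicator_of_notMem hx, mul_zero, abs_zero]; positivity
    have hbd : ∀ x, |md x * h x| ≤ n * (2 * n) := by
      intro x
      by_cases hx : x ∈ G
      · rw [abs_mul]
        exact mul_le_mul hx.1 (hb x) (abs_nonneg _) hn0
      · simp only [h, Set.indicator_of_notMem hx, mul_zero, abs_zero]; positivity
    have e1 := key1 h hm ⟨_, hb⟩
    have e2 := hmSI h hm ⟨_, hb⟩
    have e3 := key2 (fun x => mdS x * h x) (hmSm.mul hm) ⟨_, hbS⟩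
    have e4 := hmdI (fun x => Q x * h x) (hQm.mul hm) ⟨1 * (2 * n), fun x => by
      rw [abs_mul]
      exact mul_le_mul (hQb x) (hb x) (abs_nonneg _) zero_le_one⟩
    have intg : ∀ g : 𝓧 → ℝ, Measurable g → (∀ x, |g x| ≤ n * (2 * n)) →
        Integrable (fun ω => ind (evD D1 D2 d) ω * (Q (X ω) * g (X ω))) P := by
      intro g hg hgb
      have hQX : Measurable fun ω => Q (X ω) := hQm.comp hX
      have hgX : Measurable fun ω => g (X ω) := hg.comp hX
      refine Integrable.of_bound (hindA.mul (hQX.mul hgX)).aestronglyMeasurable (n * (2 * n))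
        (Filter.Eventually.of_forall fun ω => ?_)
      rw [Real.norm_eq_abs, abs_mul, abs_mul]
      have h1 : |Q (X ω)| * |g (X ω)| ≤ 1 * (n * (2 * n)) :=
        mul_le_mul (hQb _) (hgb _) (abs_nonneg _) zero_le_one
      have h2 := mul_le_mul (ind01 (evD D1 D2 d) ω) h1 (by positivity) zero_le_one
      linarith
    have i1 := intg (fun x => md x * h x) (hmdm.mul hm) hbd
    have i2 := intg (fun x => mdS x * h x) (hmSm.mul hm) hbS
    have e5 : ∫ ω, ind (evD D1 D2 d) ω * (Q (X ω) * (md (X ω) * h (X ω))) ∂P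
        = ∫ ω, ind (evD D1 D2 d) ω * (Q (X ω) * (mdS (X ω) * h (X ω))) ∂P := by
      rw [← e3]
      have : ∫ ω, ind (evD D1 D2 d) ω * (Q (X ω) * (md (X ω) * h (X ω))) ∂P
          = ∫ ω, ind (evD D1 D2 d) ω * md (X ω) * (Q (X ω) * h (X ω)) ∂P := by
        congr 1; ext ω; ring
      rw [this, ← e4, ← e1, e2]
      congr 1; ext ω; ring
    have e6 := sub_eq_zero.mpr e5
    rw [← integral_sub i1 i2] at e6
    have hmul : ∀ x, (md x - mdS x) * h x = h x ^ 2 := by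
      intro x
      by_cases hx : x ∈ G
      · simp only [h, Set.indicator_of_mem hx]; ring
      · simp [h, Set.indicator_of_notMem hx]
    have hform : ∀ ω, ind (evD D1 D2 d) ω * (Q (X ω) * (md (X ω) * h (X ω)))
        - ind (evD D1 D2 d) ω * (Q (X ω) * (mdS (X ω) * h (X ω)))
        = ind (evD D1 D2 d) ω * (Q (X ω) * h (X ω) ^ 2) := by
      intro ω
      rw [← hmul]; ring
    have hnn : 0 ≤ᵐ[P] fun ω => ind (evD D1 D2 d) ω * (Q (X ω) * (md (X ω) * h (X ω)))
        - ind (evD D1 D2 d) ω * (Q (X ω) * (mdS (X ω) * h (X ω))) := by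
      filter_upwards [hq, hQq] with ω h1 h2
      rw [hform, ← h2]
      have h3 : 0 ≤ ind (evD D1 D2 d) ω := Set.indicator_nonneg (fun _ _ => zero_le_one) ω
      have := h1.1.le
      simp only [Pi.zero_apply]
      positivity
    have hz := (integral_eq_zero_iff_of_nonneg_ae hnn (i1.sub i2)).1 e6
    filter_upwards [hz, hq, hQq] with ω h1 h2 h3 hA hm1 hm2
    rw [hform, ← h3] at h1
    have hx : X ω ∈ G := ⟨hm1, hm2⟩
    have hi : ind (evD D1 D2 d) ω = 1 := by simp [ind, hA]
    rw [hi] at h1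
    simp only [one_mul, Pi.zero_apply, mul_eq_zero, h2.1.ne', false_or, h,
      Set.indicator_of_mem hx] at h1
    exact sub_eq_zero.1 (pow_eq_zero_iff two_ne_zero |>.1 h1)
  rw [ae_restrict_iff' hAm]
  filter_upwards [ae_all_iff.2 main] with ω hω hA
  obtain ⟨n, hn⟩ := exists_nat_ge (max |md (X ω)| |mdS (X ω)|)
  exact hω n hA ((le_max_left _ _).trans hn) ((le_max_right _ _).trans hn)

end DIDMissing
end
end
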